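/- Let R be a commutative ring, x, y ∈ R, and M an R-module. Then there is a natural short exact sequence of R-modules 0 → (Γ_y M)/x^∞ → H¹_{(x,y)}(M) → Γ_x(M/y^∞) → 0, where H¹_{(x,y)}(M) is the first cohomology of the Čech complex M → M_x ⊕ M_y → M_{xy}, (Γ_y M)/x^∞ is the cokernel of the localization map Γ_y M → (Γ_y M)_x, and Γ_x(M/y^∞) is the x-power torsion submodule of the cokernel of M → M_y. -/

import Mathlib

noncomputable section

variable {R : Type*} [CommRing R]

/-- The localization of `M` away from `x`. -/
abbrev Loc (x : R) (M : Type*) [AddCommGroup M] [Module R M] :=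
  LocalizedModule (Submonoid.powers x) M

/-- The canonical localization map `M → M_x`. -/
abbrev locMap (x : R) (M : Type*) [AddCommGroup M] [Module R M] : M →ₗ[R] Loc x M :=
  LocalizedModule.mkLinearMap (Submonoid.powers x) M

/-- The cokernel `M/x^∞` of the localization map `M → M_x`. -/
abbrev CokLoc (x : R) (M : Type*) [AddCommGroup M] [Module R M] :=
  Loc x M ⧸ LinearMap.range (locMap x M)

lemma isUnit_left (x y : R) (M : Type*) [AddCommGroup M] [Module R M] :
    ∀ s : Submonoid.powers x,
      IsUnit ((algebraMap R (Module.End R (Loc (x * y) M))) s) := by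
  rintro ⟨s, n, rfl⟩
  have h : IsUnit ((algebraMap R (Module.End R (Loc (x * y) M))) (x * y)) :=
    IsLocalizedModule.map_units (locMap (x * y) M) ⟨x * y, Submonoid.mem_powers _⟩
  rw [map_mul] at h
  have hx := (((Commute.all x y).map
    (algebraMap R (Module.End R (Loc (x * y) M)))).isUnit_mul_iff.mp h).1
  simpa [map_pow] using hx.pow n

lemma isUnit_right (x y : R) (M : Type*) [AddCommGroup M] [Module R M] :
    ∀ s : Submonoid.powers y,
      IsUnit ((algebraMap R (Module.End R (Loc (x * y) M))) s) := by
  rintro ⟨s, n, rfl⟩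
  have h : IsUnit ((algebraMap R (Module.End R (Loc (x * y) M))) (x * y)) :=
    IsLocalizedModule.map_units (locMap (x * y) M) ⟨x * y, Submonoid.mem_powers _⟩
  rw [map_mul] at h
  have hy := (((Commute.all x y).map
    (algebraMap R (Module.End R (Loc (x * y) M)))).isUnit_mul_iff.mp h).2
  simpa [map_pow] using hy.pow n

/-- The canonical map `M_x → M_{xy}`. -/
abbrev locMapLeft (x y : R) (M : Type*) [AddCommGroup M] [Module R M] :
    Loc x M →ₗ[R] Loc (x * y) M :=
  LocalizedModule.lift (Submonoid.powers x) (locMap (x * y) M) (isUnit_left x y M)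

/-- The canonical map `M_y → M_{xy}`. -/
abbrev locMapRight (x y : R) (M : Type*) [AddCommGroup M] [Module R M] :
    Loc y M →ₗ[R] Loc (x * y) M :=
  LocalizedModule.lift (Submonoid.powers y) (locMap (x * y) M) (isUnit_right x y M)

/-- The first differential `M → M_x ⊕ M_y` of the Čech complex of `(x, y)`. -/
def cechD0 (x y : R) (M : Type*) [AddCommGroup M] [Module R M] :
    M →ₗ[R] Loc x M × Loc y M :=
  (locMap x M).prod (locMap y M)

/-- The second differential `M_x ⊕ M_y → M_{xy}`, `(a, b) ↦ b - a`. -/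
def cechD1 (x y : R) (M : Type*) [AddCommGroup M] [Module R M] :
    Loc x M × Loc y M →ₗ[R] Loc (x * y) M :=
  (locMapRight x y M).comp (LinearMap.snd R _ _) -
    (locMapLeft x y M).comp (LinearMap.fst R _ _)

/-- `H⁰` of the Čech complex of `(x, y)` with coefficients in `M`. -/
def cechH0 (x y : R) (M : Type*) [AddCommGroup M] [Module R M] : Submodule R M :=
  LinearMap.ker (cechD0 x y M)

/-- `H¹` of the Čech complex of `(x, y)` with coefficients in `M`. -/
def cechH1 (x y : R) (M : Type*) [AddCommGroup M] [Module R M] :=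
  LinearMap.ker (cechD1 x y M) ⧸
    Submodule.comap (LinearMap.ker (cechD1 x y M)).subtype (LinearMap.range (cechD0 x y M))

instance (x y : R) (M : Type*) [AddCommGroup M] [Module R M] : AddCommGroup (cechH1 x y M) := by
  unfold cechH1; infer_instance

instance (x y : R) (M : Type*) [AddCommGroup M] [Module R M] : Module R (cechH1 x y M) := by
  unfold cechH1; infer_instance

/-- `H²` of the Čech complex of `(x, y)` with coefficients in `M`. -/
def cechH2 (x y : R) (M : Type*) [AddCommGroup M] [Module R M] :=
  Loc (x * y) M ⧸ LinearMap.range (cechD1 x y M)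

instance (x y : R) (M : Type*) [AddCommGroup M] [Module R M] : AddCommGroup (cechH2 x y M) := by
  unfold cechH2; infer_instance

instance (x y : R) (M : Type*) [AddCommGroup M] [Module R M] : Module R (cechH2 x y M) := by
  unfold cechH2; infer_instance


/-- The `x`-power torsion submodule `Γ_x M = {m ∈ M : xⁿ • m = 0 for some n}`. -/
def elPowerTorsion (x : R) (M : Type*) [AddCommGroup M] [Module R M] : Submodule R M :=
  ⨆ n : ℕ, Submodule.torsionBy R M (x ^ n)

lemma mem_elPT (x : R) (M : Type*) [AddCommGroup M] [Module R M] (m : M) :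
    m ∈ elPowerTorsion x M ↔ ∃ n : ℕ, x ^ n • m = 0 := by
  unfold elPowerTorsion
  rw [Submodule.mem_iSup_of_directed]
  · simp [Submodule.mem_torsionBy_iff]
  · apply Monotone.directed_le
    intro a b hab m hm
    rw [Submodule.mem_torsionBy_iff] at hm ⊢
    obtain ⟨c, rfl⟩ := Nat.exists_eq_add_of_le hab
    rw [pow_add, mul_comm, mul_smul, hm, smul_zero]

lemma loc_rep (x : R) (M : Type*) [AddCommGroup M] [Module R M] (a : Loc x M) :
    ∃ (n : ℕ) (m : M), x ^ n • a = locMap x M m := by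
  obtain ⟨⟨m, ⟨s, n, rfl⟩⟩, h⟩ := IsLocalizedModule.surj (Submonoid.powers x) (locMap x M) a
  exact ⟨n, m, h⟩

lemma loc_cancel (x : R) (M : Type*) [AddCommGroup M] [Module R M] (n : ℕ) (a : Loc x M)
    (h : x ^ n • a = 0) : a = 0 := by
  apply IsLocalizedModule.smul_injective (locMap x M) (⟨x ^ n, n, rfl⟩ : Submonoid.powers x)
  simpa [Submonoid.smul_def] using h

lemma loc_div (x : R) (M : Type*) [AddCommGroup M] [Module R M] (n : ℕ) (m : M) :
    ∃ a : Loc x M, x ^ n • a = locMap x M m :=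
  ⟨IsLocalizedModule.mk' (locMap x M) m (⟨x ^ n, n, rfl⟩ : Submonoid.powers x),
    IsLocalizedModule.mk'_cancel' (locMap x M) m (⟨x ^ n, n, rfl⟩ : Submonoid.powers x)⟩

lemma locMap_zero (x : R) (M : Type*) [AddCommGroup M] [Module R M] (m : M) :
    locMap x M m = 0 ↔ ∃ n : ℕ, x ^ n • m = 0 := by
  rw [IsLocalizedModule.eq_zero_iff (Submonoid.powers x) (locMap x M)]
  constructor
  · rintro ⟨⟨s, n, rfl⟩, h⟩
    exact ⟨n, h⟩
  · rintro ⟨n, h⟩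
    exact ⟨⟨x ^ n, n, rfl⟩, h⟩

lemma left_cancel (x y : R) (M : Type*) [AddCommGroup M] [Module R M] (n : ℕ)
    (a : Loc (x * y) M) (h : x ^ n • a = 0) : a = 0 := by
  apply loc_cancel (x * y) M n
  rw [mul_pow, mul_comm (x ^ n), mul_smul, h, smul_zero]

lemma right_cancel (x y : R) (M : Type*) [AddCommGroup M] [Module R M] (n : ℕ)
    (a : Loc (x * y) M) (h : y ^ n • a = 0) : a = 0 := by
  apply loc_cancel (x * y) M n
  rw [mul_pow, mul_smul, h, smul_zero]

lemma left_apply (x y : R) (M : Type*) [AddCommGroup M] [Module R M] (m : M) :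
    locMapLeft x y M (locMap x M m) = locMap (x * y) M m :=
  LinearMap.congr_fun (LocalizedModule.lift_comp _ _ (isUnit_left x y M)) m

lemma right_apply (x y : R) (M : Type*) [AddCommGroup M] [Module R M] (m : M) :
    locMapRight x y M (locMap y M m) = locMap (x * y) M m :=
  LinearMap.congr_fun (LocalizedModule.lift_comp _ _ (isUnit_right x y M)) m

def iotaLoc (x y : R) (M : Type*) [AddCommGroup M] [Module R M] :
    Loc x (elPowerTorsion y M) →ₗ[R] Loc x M :=
  IsLocalizedModule.map (Submonoid.powers x) (locMap x (elPowerTorsion y M)) (locMap x M)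
    (elPowerTorsion y M).subtype

lemma iota_apply (x y : R) (M : Type*) [AddCommGroup M] [Module R M] (m : elPowerTorsion y M) :
    iotaLoc x y M (locMap x _ m) = locMap x M m :=
  IsLocalizedModule.map_apply _ _ _ _ _

lemma iota_inj (x y : R) (M : Type*) [AddCommGroup M] [Module R M] :
    Function.Injective (iotaLoc x y M) :=
  IsLocalizedModule.map_injective _ _ _ _ (Submodule.injective_subtype _)

lemma left_iota (x y : R) (M : Type*) [AddCommGroup M] [Module R M]
    (a : Loc x (elPowerTorsion y M)) : locMapLeft x y M (iotaLoc x y M a) = 0 := by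
  obtain ⟨n, m, h⟩ := loc_rep x _ a
  obtain ⟨k, hk⟩ := (mem_elPT y M m).1 m.2
  apply left_cancel x y M n
  rw [← map_smul, ← map_smul, h, iota_apply, left_apply]
  apply right_cancel x y M k
  rw [← map_smul, hk, map_zero]

lemma left_ker (x y : R) (M : Type*) [AddCommGroup M] [Module R M]
    (a : Loc x M) (ha : locMapLeft x y M a = 0) : ∃ a', iotaLoc x y M a' = a := by
  obtain ⟨n, m, h⟩ := loc_rep x _ a
  have h0 : locMap (x * y) M m = 0 := by
    rw [← left_apply, ← h, map_smul, ha, smul_zero]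
  obtain ⟨j, hj⟩ := (locMap_zero _ _ _).1 h0
  have hm : x ^ j • m ∈ elPowerTorsion y M :=
    (mem_elPT y M _).2 ⟨j, by rw [← mul_smul, ← mul_pow, mul_comm y x, hj]⟩
  obtain ⟨a', ha'⟩ := loc_div x (elPowerTorsion y M) (j + n) ⟨_, hm⟩
  refine ⟨a', ?_⟩
  rw [← sub_eq_zero]
  apply loc_cancel x M (j + n)
  rw [smul_sub, ← map_smul, ha', iota_apply, pow_add, mul_smul, h, ← map_smul, sub_self]

lemma right_ker (x y : R) (M : Type*) [AddCommGroup M] [Module R M]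
    (b : Loc y M) (hb : locMapRight x y M b = 0) : ∃ j : ℕ, x ^ j • b = 0 := by
  obtain ⟨n, m, h⟩ := loc_rep y _ b
  have h0 : locMap (x * y) M m = 0 := by
    rw [← right_apply, ← h, map_smul, hb, smul_zero]
  obtain ⟨j, hj⟩ := (locMap_zero _ _ _).1 h0
  refine ⟨j, loc_cancel y M (j + n) _ ?_⟩
  rw [smul_comm, pow_add, mul_smul, h, ← map_smul, ← map_smul, ← mul_smul, ← mul_pow, hj, map_zero]

lemma mem_kerD1 (x y : R) (M : Type*) [AddCommGroup M] [Module R M] (z : Loc x M × Loc y M) :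
    z ∈ LinearMap.ker (cechD1 x y M) ↔ locMapRight x y M z.2 = locMapLeft x y M z.1 := by
  rw [LinearMap.mem_ker]
  exact sub_eq_zero (a := locMapRight x y M z.2) (b := locMapLeft x y M z.1)

lemma cocycle_torsion (x y : R) (M : Type*) [AddCommGroup M] [Module R M]
    (z : LinearMap.ker (cechD1 x y M)) :
    (LinearMap.range (locMap y M)).mkQ z.1.2 ∈ elPowerTorsion x (CokLoc y M) := by
  obtain ⟨⟨a, b⟩, hz⟩ := z
  rw [mem_kerD1] at hz
  simp only at hz ⊢
  obtain ⟨n, m, h⟩ := loc_rep x _ a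
  obtain ⟨j, hj⟩ := right_ker x y M (x ^ n • b - locMap y M m) (by
    rw [map_sub, map_smul, hz, ← map_smul, h, left_apply, right_apply, sub_self])
  rw [mem_elPT]
  refine ⟨j + n, ?_⟩
  rw [← map_smul, Submodule.mkQ_apply, Submodule.Quotient.mk_eq_zero]
  refine ⟨x ^ j • m, ?_⟩
  rw [smul_sub, sub_eq_zero] at hj
  rw [map_smul, ← hj, pow_add, mul_smul]

def mkH1 (x y : R) (M : Type*) [AddCommGroup M] [Module R M] :
    LinearMap.ker (cechD1 x y M) →ₗ[R] cechH1 x y M :=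
  Submodule.mkQ (Submodule.comap (LinearMap.ker (cechD1 x y M)).subtype
    (LinearMap.range (cechD0 x y M)))

lemma mkH1_surj (x y : R) (M : Type*) [AddCommGroup M] [Module R M] :
    Function.Surjective (mkH1 x y M) :=
  Submodule.mkQ_surjective _

lemma mkH1_zero (x y : R) (M : Type*) [AddCommGroup M] [Module R M]
    (z : LinearMap.ker (cechD1 x y M)) :
    mkH1 x y M z = 0 ↔ ∃ m, locMap x M m = z.1.1 ∧ locMap y M m = z.1.2 := by
  refine (Submodule.Quotient.mk_eq_zero _).trans ?_
  rw [Submodule.mem_comap, LinearMap.mem_range]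
  exact exists_congr fun m => Prod.ext_iff

def gPre (x y : R) (M : Type*) [AddCommGroup M] [Module R M] :
    LinearMap.ker (cechD1 x y M) →ₗ[R] elPowerTorsion x (CokLoc y M) :=
  LinearMap.codRestrict _ ((LinearMap.range (locMap y M)).mkQ ∘ₗ LinearMap.snd R _ _ ∘ₗ
    (LinearMap.ker (cechD1 x y M)).subtype) (cocycle_torsion x y M)

lemma gPre_zero (x y : R) (M : Type*) [AddCommGroup M] [Module R M]
    (z : LinearMap.ker (cechD1 x y M)) :
    gPre x y M z = 0 ↔ ∃ m, locMap y M m = z.1.2 := by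
  rw [← Subtype.coe_inj]
  exact Submodule.Quotient.mk_eq_zero _

def gMap (x y : R) (M : Type*) [AddCommGroup M] [Module R M] :
    cechH1 x y M →ₗ[R] elPowerTorsion x (CokLoc y M) :=
  Submodule.liftQ (Submodule.comap (LinearMap.ker (cechD1 x y M)).subtype
    (LinearMap.range (cechD0 x y M))) (gPre x y M) (by
    rintro z ⟨m, hm⟩
    exact (gPre_zero x y M z).2 ⟨m, congrArg Prod.snd hm⟩)

lemma gMap_mk (x y : R) (M : Type*) [AddCommGroup M] [Module R M]
    (z : LinearMap.ker (cechD1 x y M)) : gMap x y M (mkH1 x y M z) = gPre x y M z := rfl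

def fPre (x y : R) (M : Type*) [AddCommGroup M] [Module R M] :
    Loc x (elPowerTorsion y M) →ₗ[R] LinearMap.ker (cechD1 x y M) :=
  LinearMap.codRestrict _ (LinearMap.inl R _ _ ∘ₗ iotaLoc x y M) (fun a => by
    rw [mem_kerD1]
    exact (map_zero _).trans (left_iota x y M a).symm)

lemma fPre_zero (x y : R) (M : Type*) [AddCommGroup M] [Module R M]
    (a : Loc x (elPowerTorsion y M)) :
    mkH1 x y M (fPre x y M a) = 0 ↔ a ∈ LinearMap.range (locMap x (elPowerTorsion y M)) := by
  rw [mkH1_zero]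
  constructor
  · rintro ⟨m, h1, h2⟩
    have hm : m ∈ elPowerTorsion y M := (mem_elPT y M m).2 ((locMap_zero y M m).1 h2)
    refine ⟨⟨m, hm⟩, iota_inj x y M ?_⟩
    rw [iota_apply]
    exact h1
  · rintro ⟨m, rfl⟩
    exact ⟨m, (iota_apply x y M m).symm, (locMap_zero y M _).2 ((mem_elPT y M m).1 m.2)⟩

/-- There is a natural short exact sequence
`0 → (Γ_y M)/x^∞ → H¹_{(x,y)}(M) → Γ_x(M/y^∞) → 0`. -/
theorem cechH1_ses (x y : R) (M : Type*) [AddCommGroup M] [Module R M] :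
    ∃ (f : CokLoc x (elPowerTorsion y M) →ₗ[R] cechH1 x y M)
      (g : cechH1 x y M →ₗ[R] elPowerTorsion x (CokLoc y M)),
      Function.Injective f ∧ Function.Exact f g ∧ Function.Surjective g := by
  refine ⟨Submodule.liftQ _ (mkH1 x y M ∘ₗ fPre x y M) (fun a ha => (fPre_zero x y M a).2 ha),
    gMap x y M, ?_, ?_, ?_⟩
  · rw [injective_iff_map_eq_zero]
    intro q
    obtain ⟨a, rfl⟩ := Submodule.mkQ_surjective _ q
    intro h
    exact (Submodule.Quotient.mk_eq_zero _).2 ((fPre_zero x y M a).1 h)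
  · intro q
    obtain ⟨z, rfl⟩ := mkH1_surj x y M q
    rw [gMap_mk, gPre_zero]
    constructor
    · rintro ⟨m, hm⟩
      obtain ⟨a', ha'⟩ := left_ker x y M (z.1.1 - locMap x M m) (by
        rw [map_sub, ← (mem_kerD1 x y M z.1).1 z.2, ← hm, right_apply, left_apply, sub_self])
      refine ⟨Submodule.Quotient.mk a', ?_⟩
      change mkH1 x y M (fPre x y M a') = _
      rw [← sub_eq_zero, ← map_sub, mkH1_zero]
      refine ⟨-m, ?_, ?_⟩
      · change _ = iotaLoc x y M a' - z.1.1
        rw [ha', map_neg]; abel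
      · change _ = 0 - z.1.2
        rw [← hm, map_neg, zero_sub]
    · rintro ⟨p, hp⟩
      obtain ⟨a, rfl⟩ := Submodule.mkQ_surjective _ p
      change mkH1 x y M (fPre x y M a) = _ at hp
      rw [← sub_eq_zero, ← map_sub, mkH1_zero] at hp
      obtain ⟨m, -, h2⟩ := hp
      change _ = 0 - z.1.2 at h2
      exact ⟨-m, by rw [map_neg, h2, zero_sub, neg_neg]⟩
  · rintro ⟨q, hq⟩
    obtain ⟨n, hn⟩ := (mem_elPT _ _ _).1 hq
    obtain ⟨b, rfl⟩ := Submodule.mkQ_surjective _ q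
    rw [← map_smul, Submodule.mkQ_apply, Submodule.Quotient.mk_eq_zero] at hn
    obtain ⟨m, hm⟩ := hn
    obtain ⟨a, ha⟩ := loc_div x M n m
    refine ⟨mkH1 x y M ⟨(a, b), (mem_kerD1 x y M _).2 ?_⟩, rfl⟩
    rw [← sub_eq_zero]
    apply left_cancel x y M n
    rw [smul_sub, ← map_smul, ← map_smul, ha]
    simp only
    rw [← hm, right_apply, left_apply, sub_self]

end
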